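/- For every a ∈ Ω, the topological boundary of A is given by ∂A = {x ∈ ℝ^d : ψ_a(x) = 0}. -/

import Mathlib

/-!
Translating by an interior direction `a` of the cone `P` pushes `closure A` into `interior A`,
because `closure A + interior P = A + interior P` is an open subset of `A`. Hence `x` lies in the
closure of `A` iff `0 ≤ ψ_a x` and in its interior iff `0 < ψ_a x`; the frontier is the difference.
The supremum `ψ_a x` is finite because every vector `v` has `T • a - v ∈ P` for some `T`.
-/

open Set Filter Topology
open scoped Pointwise

/-- The function `ψ_a` of the set `A`: how far one can move from `x` in the direction `-a` and be
in `A`. As a real supremum it takes the junk value `0` when the set of such `t` is empty or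
unbounded above. -/
noncomputable def depthAlong {E : Type*} [AddCommGroup E] [Module ℝ E] (a : E) (A : Set E)
    (x : E) : ℝ :=
  sSup {t : ℝ | x - t • a ∈ A}

theorem closure_add_interior_subset_interior {G : Type*} [AddGroup G] [TopologicalSpace G]
    [IsTopologicalAddGroup G] {A P : Set G} (hAP : A + P ⊆ A) :
    closure A + interior P ⊆ interior A := by
  rw [isOpen_interior.closure_add]
  exact interior_maximal ((add_subset_add_left interior_subset).trans hAP)
    isOpen_interior.add_left

section

variable {E : Type*} [AddCommGroup E] [Module ℝ E] {P A : Set E} {a x : E}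

theorem sub_smul_mem_of_lt (hP : ∀ c : ℝ, 0 < c → c • P ⊆ P) (hAP : A + P ⊆ A) (ha : a ∈ P)
    {s t : ℝ} (hst : s < t) (ht : x - t • a ∈ A) : x - s • a ∈ A := by
  have hmem : (t - s) • a ∈ P := hP _ (sub_pos.2 hst) (smul_mem_smul_set ha)
  have hsum : x - s • a = x - t • a + (t - s) • a := by module
  exact hsum ▸ hAP (add_mem_add ht hmem)

variable [TopologicalSpace E]

theorem smul_mem_interior_of_pos [ContinuousConstSMul ℝ E]
    (hP : ∀ c : ℝ, 0 < c → c • P ⊆ P) (ha : a ∈ interior P) {s : ℝ} (hs : 0 < s) :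
    s • a ∈ interior P := by
  have hsa : s • a ∈ interior (s • P) := interior_smul₀ hs.ne' P ▸ smul_mem_smul_set ha
  exact interior_mono (hP s hs) hsa

variable [IsTopologicalAddGroup E]

theorem add_smul_mem_interior_of_mem_closure [ContinuousConstSMul ℝ E]
    (hP : ∀ c : ℝ, 0 < c → c • P ⊆ P) (hAP : A + P ⊆ A) (ha : a ∈ interior P)
    (hx : x ∈ closure A) {s : ℝ} (hs : 0 < s) : x + s • a ∈ interior A :=
  closure_add_interior_subset_interior hAP
    (add_mem_add hx (smul_mem_interior_of_pos hP ha hs))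

variable [ContinuousSMul ℝ E]

theorem tendsto_sub_smul_nhds_zero (x v : E) :
    Tendsto (fun t : ℝ ↦ x - t • v) (𝓝 0) (𝓝 x) :=
  Continuous.tendsto' (by fun_prop) 0 x (by simp)

theorem exists_pos_sub_smul_mem_of_mem_interior (hx : x ∈ interior A) (v : E) :
    ∃ t : ℝ, 0 < t ∧ x - t • v ∈ A := by
  have hnear : ∀ᶠ t : ℝ in 𝓝[>] 0, x - t • v ∈ A :=
    ((tendsto_sub_smul_nhds_zero x v).mono_left nhdsWithin_le_nhds).eventually_mem
      (mem_interior_iff_mem_nhds.1 hx)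
  exact (eventually_mem_nhdsWithin.and hnear).exists

theorem exists_smul_sub_mem_of_mem_interior (hP : ∀ c : ℝ, 0 < c → c • P ⊆ P)
    (ha : a ∈ interior P) (v : E) : ∃ T : ℝ, T • a - v ∈ P := by
  obtain ⟨ε, hε, hεP⟩ := exists_pos_sub_smul_mem_of_mem_interior ha v
  have hscaled : ε⁻¹ • (a - ε • v) ∈ P := hP _ (inv_pos.2 hε) (smul_mem_smul_set hεP)
  exact ⟨ε⁻¹, by rwa [smul_sub, inv_smul_smul₀ hε.ne'] at hscaled⟩

theorem nonempty_setOf_sub_smul_mem (hP : ∀ c : ℝ, 0 < c → c • P ⊆ P) (hAP : A + P ⊆ A)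
    (hA : A.Nonempty) (ha : a ∈ interior P) (x : E) : {t : ℝ | x - t • a ∈ A}.Nonempty := by
  obtain ⟨y, hy⟩ := hA
  obtain ⟨T, hT⟩ := exists_smul_sub_mem_of_mem_interior hP ha (y - x)
  have hsum : x - (-T) • a = y + (T • a - (y - x)) := by module
  have hmem : x - (-T) • a ∈ A := hsum ▸ hAP (add_mem_add hy hT)
  exact ⟨-T, hmem⟩

theorem bddAbove_setOf_sub_smul_mem (hP : ∀ c : ℝ, 0 < c → c • P ⊆ P) (hAP : A + P ⊆ A)
    (hA : A ≠ univ) (ha : a ∈ interior P) (x : E) : BddAbove {t : ℝ | x - t • a ∈ A} := by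
  obtain ⟨z, hz⟩ := (ne_univ_iff_exists_notMem A).1 hA
  obtain ⟨T, hT⟩ := exists_smul_sub_mem_of_mem_interior hP ha (x - z)
  refine ⟨T, fun t ht ↦ le_of_not_gt fun hTt ↦ hz ?_⟩
  have hxT : x - T • a ∈ A := sub_smul_mem_of_lt hP hAP (interior_subset ha) hTt ht
  have hsum : z = x - T • a + (T • a - (x - z)) := by module
  exact hsum ▸ hAP (add_mem_add hxT hT)

theorem mem_closure_iff_depthAlong_nonneg (hP : ∀ c : ℝ, 0 < c → c • P ⊆ P) (hAP : A + P ⊆ A)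
    (hne : A.Nonempty) (huniv : A ≠ univ) (ha : a ∈ interior P) :
    x ∈ closure A ↔ 0 ≤ depthAlong a A x := by
  constructor
  · intro hx
    refine le_of_forall_lt fun t ht ↦ ?_
    obtain ⟨s, hts, hs⟩ := exists_between ht
    have hxs : x - s • a ∈ A := by
      simpa [sub_eq_add_neg] using interior_subset
        (add_smul_mem_interior_of_mem_closure hP hAP ha hx (neg_pos.2 hs))
    exact hts.trans_le (le_csSup (bddAbove_setOf_sub_smul_mem hP hAP huniv ha x) hxs)
  · intro hx
    have hmem : ∀ s < (0 : ℝ), x - s • a ∈ A := fun s hs ↦ by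
      obtain ⟨t, ht, hst⟩ :=
        exists_lt_of_lt_csSup (nonempty_setOf_sub_smul_mem hP hAP hne ha x) (hs.trans_le hx)
      exact sub_smul_mem_of_lt hP hAP (interior_subset ha) hst ht
    have hlim : Tendsto (fun s : ℝ ↦ x - s • a) (𝓝[<] 0) (𝓝 x) :=
      (tendsto_sub_smul_nhds_zero x a).mono_left nhdsWithin_le_nhds
    exact mem_closure_of_tendsto hlim (eventually_mem_nhdsWithin.mono hmem)

theorem mem_interior_iff_depthAlong_pos (hP : ∀ c : ℝ, 0 < c → c • P ⊆ P) (hAP : A + P ⊆ A)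
    (hne : A.Nonempty) (huniv : A ≠ univ) (ha : a ∈ interior P) :
    x ∈ interior A ↔ 0 < depthAlong a A x := by
  constructor
  · intro hx
    obtain ⟨t, ht, htA⟩ := exists_pos_sub_smul_mem_of_mem_interior hx a
    exact ht.trans_le (le_csSup (bddAbove_setOf_sub_smul_mem hP hAP huniv ha x) htA)
  · intro hx
    obtain ⟨t, htA, ht⟩ :=
      exists_lt_of_lt_csSup (nonempty_setOf_sub_smul_mem hP hAP hne ha x) hx
    simpa using add_smul_mem_interior_of_mem_closure hP hAP ha (subset_closure htA) ht

theorem stmt_8_general (hP : ∀ c : ℝ, 0 < c → c • P ⊆ P) (hAP : A + P ⊆ A)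
    (hne : A.Nonempty) (huniv : A ≠ univ) (ha : a ∈ interior P) :
    frontier A = {x : E | depthAlong a A x = 0} := by
  ext x
  rw [frontier, Set.mem_sdiff, mem_closure_iff_depthAlong_nonneg hP hAP hne huniv ha,
    mem_interior_iff_depthAlong_pos hP hAP hne huniv ha, not_lt, and_comm, ← le_antisymm_iff,
    mem_ofPred_eq]

end

theorem stmt_8 {d : ℕ} (P A : Set (EuclideanSpace ℝ (Fin d)))
    (hPclosed : IsClosed P) (hPconvex : Convex ℝ P)
    (hPcone : ∀ c : ℝ, 0 ≤ c → ∀ x ∈ P, c • x ∈ P)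
    (hPspan : Submodule.span ℝ P = ⊤)
    (hPline : ∀ x ∈ P, -x ∈ P → x = 0)
    (hAne : A.Nonempty) (hAclosed : IsClosed A)
    (hAmod : ∀ x ∈ A, ∀ p ∈ P, x + p ∈ A)
    (hAproper : A ≠ Set.univ)
    (a : EuclideanSpace ℝ (Fin d)) (ha : a ∈ interior P) :
    frontier A = {x : EuclideanSpace ℝ (Fin d) | sSup {t : ℝ | x - t • a ∈ A} = 0} := by
  exact stmt_8_general (fun c hc ↦ smul_set_subset_iff.2 fun _ ↦ hPcone c hc.le _)
    (add_subset_iff.2 hAmod) hAne hAproper ha
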